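/- (Example: the (8,1) aligned secret sharing scheme.) Let F be a field, and let A_1, A_2, K_A ∈ F^{a×n} and B_1, B_2, K_B ∈ F^{n×b}. Define the matrix-coefficient polynomials Ã(x) = A_1 + A_2 x + K_A x² and B̃(x) = B_1 + B_2 x³ + K_B x⁵. Then Ã(x)·B̃(x) = A_1B_1 + A_2B_1 x + K_AB_1 x² + A_1B_2 x³ + A_2B_2 x⁴ + (K_AB_2 + A_1K_B) x⁵ + A_2K_B x⁶ + K_AK_B x⁷; in particular, the product polynomial has degree at most 7, its coefficients of x⁰, x¹, x³, x⁴ are exactly A_1B_1, A_2B_1, A_1B_2, A_2B_2, and consequently these four products are uniquely determined by the evaluations Ã(x_i)·B̃(x_i) at any 8 distinct points x_1, ..., x_8 of F. -/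

import Mathlib

/-!
Expanding the product of the two encodings gives a matrix polynomial of degree at most 7
(`aligned_mul_expand`). Entry by entry, such a polynomial is determined by its values at 8
distinct points, the Vandermonde matrix being invertible (`coeff_eq_of_eval_eq`); the four
products are its coefficients in degrees 0, 1, 3 and 4.
-/

/-- The aligned encoding of the `A` side in the `(8,1)` example:
`Ã(x) = A₁ + A₂ x + K_A x²`. -/
def alignedA {F : Type*} [Field F] {a n : ℕ}
    (A1 A2 KA : Matrix (Fin a) (Fin n) F) (x : F) : Matrix (Fin a) (Fin n) F :=
  A1 + x • A2 + x ^ 2 • KA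

/-- The aligned encoding of the `B` side in the `(8,1)` example:
`B̃(x) = B₁ + B₂ x³ + K_B x⁵`. -/
def alignedB {F : Type*} [Field F] {n b : ℕ}
    (B1 B2 KB : Matrix (Fin n) (Fin b) F) (x : F) : Matrix (Fin n) (Fin b) F :=
  B1 + x ^ 3 • B2 + x ^ 5 • KB

/-- The expansion of the product of the two encodings: the interference terms `K_A B₂` and
`A₁ K_B` share the degree `2 + 3 = 0 + 5`. -/
theorem aligned_mul_expand {F : Type*} [Field F] {a n b : ℕ}
    (A1 A2 KA : Matrix (Fin a) (Fin n) F) (B1 B2 KB : Matrix (Fin n) (Fin b) F) (x : F) :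
    alignedA A1 A2 KA x * alignedB B1 B2 KB x
      = A1 * B1 + x • (A2 * B1) + x ^ 2 • (KA * B1) + x ^ 3 • (A1 * B2)
          + x ^ 4 • (A2 * B2) + x ^ 5 • (KA * B2 + A1 * KB)
          + x ^ 6 • (A2 * KB) + x ^ 7 • (KA * KB) := by
  simp only [alignedA, alignedB, Matrix.add_mul, Matrix.mul_add, Matrix.smul_mul,
    Matrix.mul_smul]
  module

/-- A polynomial of degree at most 7 is determined by its values at 8 distinct points
(invertibility of the Vandermonde matrix). -/
theorem coeff_eq_of_eval_eq {F : Type*} [Field F] (x : Fin 8 → F)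
    (hx : Function.Injective x) (c d : Fin 8 → F)
    (h : ∀ i, ∑ j : Fin 8, x i ^ (j : ℕ) * c j = ∑ j : Fin 8, x i ^ (j : ℕ) * d j) :
    c = d := by
  rw [← sub_eq_zero]
  refine Matrix.eq_zero_of_forall_index_sum_pow_mul_eq_zero hx fun i => ?_
  simp only [Pi.sub_apply, mul_sub, Finset.sum_sub_distrib, h i, sub_self]

/-- Example 2, the `(8,1)` aligned secret sharing scheme: with `Ã(x) = A₁ + A₂x + K_Ax²`
and `B̃(x) = B₁ + B₂x³ + K_Bx⁵`, the product expands as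
`Ã(x)B̃(x) = A₁B₁ + A₂B₁x + K_AB₁x² + A₁B₂x³ + A₂B₂x⁴ + (K_AB₂ + A₁K_B)x⁵ + A₂K_Bx⁶ + K_AK_Bx⁷`
(a polynomial of degree at most 7 whose coefficients of `x⁰, x¹, x³, x⁴` are exactly
`A₁B₁, A₂B₁, A₁B₂, A₂B₂`), and consequently these four products are uniquely determined
by the evaluations `Ã(xᵢ)·B̃(xᵢ)` at any 8 distinct points. -/
theorem aligned_example_8_1
    {F : Type*} [Field F] {a n b : ℕ}
    (A1 A2 KA : Matrix (Fin a) (Fin n) F) (B1 B2 KB : Matrix (Fin n) (Fin b) F) :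
    (∀ x : F,
      alignedA A1 A2 KA x * alignedB B1 B2 KB x
        = A1 * B1 + x • (A2 * B1) + x ^ 2 • (KA * B1) + x ^ 3 • (A1 * B2)
            + x ^ 4 • (A2 * B2) + x ^ 5 • (KA * B2 + A1 * KB)
            + x ^ 6 • (A2 * KB) + x ^ 7 • (KA * KB)) ∧
    (∀ (x : Fin 8 → F), Function.Injective x →
      ∀ (A1' A2' KA' : Matrix (Fin a) (Fin n) F) (B1' B2' KB' : Matrix (Fin n) (Fin b) F),
        (∀ i : Fin 8,
          alignedA A1 A2 KA (x i) * alignedB B1 B2 KB (x i)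
            = alignedA A1' A2' KA' (x i) * alignedB B1' B2' KB' (x i)) →
        A1 * B1 = A1' * B1' ∧ A2 * B1 = A2' * B1' ∧
          A1 * B2 = A1' * B2' ∧ A2 * B2 = A2' * B2') := by
  refine ⟨aligned_mul_expand A1 A2 KA B1 B2 KB, ?_⟩
  intro x hx A1' A2' KA' B1' B2' KB' h
  have key : ∀ p q,
      (A1 * B1) p q = (A1' * B1') p q ∧ (A2 * B1) p q = (A2' * B1') p q ∧
        (A1 * B2) p q = (A1' * B2') p q ∧ (A2 * B2) p q = (A2' * B2') p q := by
    intro p q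
    have hcd := coeff_eq_of_eval_eq x hx
      ![(A1 * B1) p q, (A2 * B1) p q, (KA * B1) p q, (A1 * B2) p q, (A2 * B2) p q,
        (KA * B2 + A1 * KB) p q, (A2 * KB) p q, (KA * KB) p q]
      ![(A1' * B1') p q, (A2' * B1') p q, (KA' * B1') p q, (A1' * B2') p q, (A2' * B2') p q,
        (KA' * B2' + A1' * KB') p q, (A2' * KB') p q, (KA' * KB') p q] (by
        intro i
        have hi := h i
        rw [aligned_mul_expand, aligned_mul_expand] at hi
        have hpq := congrFun (congrFun hi p) q
        simp only [Matrix.add_apply, Matrix.smul_apply, smul_eq_mul] at hpq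
        simpa [Fin.sum_univ_succ, add_assoc] using hpq)
    exact ⟨congrFun hcd 0, congrFun hcd 1, congrFun hcd 3, congrFun hcd 4⟩
  exact ⟨Matrix.ext fun p q => (key p q).1, Matrix.ext fun p q => (key p q).2.1,
    Matrix.ext fun p q => (key p q).2.2.1, Matrix.ext fun p q => (key p q).2.2.2⟩
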